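/- arXiv:1712.04685 — 2 statements merged into one kernel-verified Lean document; each statement's English description precedes it below -/
import Mathlib

section
/- Assume Assumption 1 holds for some η₀ > 0 and 0 < η ≤ η₀. For all f ∈ H¹_per(0,1): ⟨f, H̃f⟩ = ⟨f, H^N f⟩ + 2 Σ_{I∈{0,a}} ⟨⟨p̃^I,f⟩ᵀ(Φ_I − Φ̃_I), H(f − ⟨p̃^I,f⟩ᵀ Φ̃_I)⟩ and ⟨f, S̃f⟩ = ⟨f, S^N f⟩ + 2 Σ_{I∈{0,a}} ⟨⟨p̃^I,f⟩ᵀ(Φ_I − Φ̃_I), f − ⟨p̃^I,f⟩ᵀ Φ̃_I⟩. -/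
open MeasureTheory Real

noncomputable section

/-- A `1`-periodic `H¹` function on `ℝ`: absolutely continuous with locally
integrable, square-integrable weak derivative `f'`. -/
structure H1per where
  f : ℝ → ℝ
  f' : ℝ → ℝ
  periodic : Function.Periodic f 1
  periodic' : Function.Periodic f' 1
  cont : Continuous f
  meas' : Measurable f'
  locInt : ∀ x y : ℝ, IntervalIntegrable f' volume x y
  sqInt : IntervalIntegrable (fun t => (f' t) ^ 2) volume 0 1
  ftc : ∀ x : ℝ, f x = f 0 + ∫ t in (0:ℝ)..x, f' t

/-- A `1`-periodic `L²` function. -/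
structure L2per where
  f : ℝ → ℝ
  meas : Measurable f
  periodic : Function.Periodic f 1
  sqInt : IntervalIntegrable (fun t => (f t) ^ 2) volume 0 1

/-- The `L²_per(0,1)` inner product `⟨f,g⟩ = ∫₀¹ f g`. -/
def L2inner (f g : ℝ → ℝ) : ℝ := ∫ x in (0:ℝ)..1, f x * g x

/-- The `L²_per(0,1)` norm. -/
def L2norm (f : ℝ → ℝ) : ℝ := Real.sqrt (∫ x in (0:ℝ)..1, (f x) ^ 2)

/-- The `H¹_per(0,1)` norm. -/
def H1norm (u : H1per) : ℝ :=
  Real.sqrt ((∫ x in (0:ℝ)..1, (u.f x) ^ 2) + ∫ x in (0:ℝ)..1, (u.f' x) ^ 2)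

/-- Sup norm of `f` on a set `s`. -/
def supNormOn (f : ℝ → ℝ) (s : Set ℝ) : ℝ := sSup ((fun x => |f x|) '' s)

/-- Global sup norm of `f`. -/
def supNorm (f : ℝ → ℝ) : ℝ := sSup (Set.range fun x => |f x|)

/-- The interval `(I-η, I+η)`. -/
def window (I η : ℝ) : Set ℝ := Set.Ioo (I - η) (I + η)

/-- Even part of `f` about the point `I`. -/
def evenPartAt (I : ℝ) (f : ℝ → ℝ) : ℝ → ℝ := fun x => (f x + f (2 * I - x)) / 2

/-- Derivative of the even part of `f` about `I`, expressed via `f'`. -/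
def evenPartDerivAt (I : ℝ) (f' : ℝ → ℝ) : ℝ → ℝ := fun x => (f' x - f' (2 * I - x)) / 2

/-- Quadratic form of `H = -d²/dx² - Z₀ Σ_k δ_k - Z_a Σ_k δ_{k+a}` on raw
(function, weak derivative) pairs. -/
def aHraw (Z0 Za A : ℝ) (u u' v v' : ℝ → ℝ) : ℝ :=
  (∫ x in (0:ℝ)..1, u' x * v' x) - Z0 * (u 0 * v 0) - Za * (u A * v A)

/-- Quadratic form of `H` on `H¹_per`. -/
def aH (Z0 Za A : ℝ) (u v : H1per) : ℝ := aHraw Z0 Za A u.f u.f' v.f v.f'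

/-- Quadratic form of the atomic Hamiltonian `-d²/dx² - Z Σ_k δ_{I+k}`. -/
def aAtom (Z I : ℝ) (u v : H1per) : ℝ :=
  (∫ x in (0:ℝ)..1, u.f' x * v.f' x) - Z * (u.f I * v.f I)

/-- `(E, ψ)` is an eigenpair of `H` (in the weak, i.e. quadratic form, sense). -/
def IsEigenpair (Z0 Za A : ℝ) (E : ℝ) (ψ : H1per) : Prop :=
  (∃ x, ψ.f x ≠ 0) ∧ ∀ v : H1per, aH Z0 Za A ψ v = E * L2inner ψ.f v.f

/-- `E` is the lowest eigenvalue of `H`. -/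
def IsLowestEigenvalue (Z0 Za A : ℝ) (E : ℝ) : Prop :=
  (∃ ψ, IsEigenpair Z0 Za A E ψ) ∧ ∀ E' ψ, IsEigenpair Z0 Za A E' ψ → E ≤ E'

/-- Generalized eigenpair of the pencil `(A, B)` of bilinear forms on `H¹_per`. -/
def IsGenEigenpair (A B : H1per → H1per → ℝ) (E : ℝ) (f : H1per) : Prop :=
  (∃ x, f.f x ≠ 0) ∧ ∀ v : H1per, A f v = E * B f v

/-- `E` is the lowest generalized eigenvalue of the pencil `(A, B)`. -/
def IsLowestGenEigenvalue (A B : H1per → H1per → ℝ) (E : ℝ) : Prop :=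
  (∃ f, IsGenEigenpair A B E f) ∧ ∀ E' f, IsGenEigenpair A B E' f → E ≤ E'

/-- Generalized eigenpair of the Galerkin (variational) approximation of the
pencil `(A, B)` in the subspace cut out by the predicate `P`. -/
def IsGalerkinGenEigenpair (A B : H1per → H1per → ℝ) (P : H1per → Prop)
    (E : ℝ) (f : H1per) : Prop :=
  P f ∧ (∃ x, f.f x ≠ 0) ∧ ∀ v : H1per, P v → A f v = E * B f v

/-- Lowest generalized eigenvalue of the Galerkin approximation. -/
def IsLowestGalerkinGenEigenvalue (A B : H1per → H1per → ℝ) (P : H1per → Prop)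
    (E : ℝ) : Prop :=
  (∃ f, IsGalerkinGenEigenpair A B P E f) ∧
    ∀ E' f, IsGalerkinGenEigenpair A B P E' f → E ≤ E'

/-- Membership in the span of the `M` plane waves `e^{2iπkx}`, `|k| ≤ M`
(written with real trigonometric functions). -/
def IsPlaneWave (M : ℕ) (u : H1per) : Prop :=
  ∃ A B : ℕ → ℝ,
    (∀ x : ℝ, u.f x = ∑ k ∈ Finset.range (M + 1),
      (A k * Real.cos (2 * Real.pi * k * x) + B k * Real.sin (2 * Real.pi * k * x))) ∧
    (∀ x : ℝ, u.f' x = ∑ k ∈ Finset.range (M + 1),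
      (2 * Real.pi * k) *
        (B k * Real.cos (2 * Real.pi * k * x) - A k * Real.sin (2 * Real.pi * k * x)))

/-- The periodized cut-off function `ρ_η(t) = Σ_{k∈ℤ} ρ((t-k)/η)`. -/
def ρperGen (ρ : ℝ → ℝ) (η t : ℝ) : ℝ := ∑' k : ℤ, ρ ((t - (k : ℝ)) / η)

/-- Gram matrix `G` of the sine functions `sin(2πjt)`, `1 ≤ j ≤ N`, for the
weight `ρ_η` on `(-η, η)`. -/
def GmatGen (N : ℕ) (ρ : ℝ → ℝ) (η : ℝ) : Matrix (Fin N) (Fin N) ℝ :=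
  Matrix.of fun j k => ∫ t in (-η)..η,
    ρperGen ρ η t * (Real.sin (2 * Real.pi * ((j : ℕ) + 1) * t) *
      Real.sin (2 * Real.pi * ((k : ℕ) + 1) * t))

/-- The odd projector functions `q̃_k = ρ_η · Σ_j (G⁻¹)_{jk} sin(2πj·)`. -/
def qtGen (N : ℕ) (ρ : ℝ → ℝ) (η : ℝ) (k : Fin N) : ℝ → ℝ :=
  fun x => ρperGen ρ η x *
    ∑ j : Fin N, (GmatGen N ρ η)⁻¹ j k * Real.sin (2 * Real.pi * ((j : ℕ) + 1) * x)

/-- The polynomials `P_k(t) = (t²-1)^k / (2^k k!)`. -/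
def Ppoly (k : ℕ) (t : ℝ) : ℝ := (t ^ 2 - 1) ^ k / ((2 : ℝ) ^ k * (Nat.factorial k : ℝ))

/-- Parameters of the one-dimensional double Dirac PAW setting: atomic
positions `0` and `a`, charges `Z₀, Z_a`, number of PAW functions `N`,
smoothness parameter `d`, cut-off shape `ρ` and pseudopotential shape `χ`. -/
structure PAWSetting where
  a : ℝ
  Z0 : ℝ
  Za : ℝ
  N : ℕ
  d : ℕ
  ρ : ℝ → ℝ
  χ : ℝ → ℝ
  ha0 : 0 < a
  ha1 : a < 1
  hZ0 : 0 < Z0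
  hZa : 0 < Za
  hN : 1 ≤ N
  hd : N ≤ d
  ρ_smooth : ContDiff ℝ (⊤ : ℕ∞) ρ
  ρ_nonneg : ∀ x, 0 ≤ ρ x
  ρ_pos : ∀ x ∈ Set.Ioo (-1 : ℝ) 1, 0 < ρ x
  ρ_supp : ∀ x : ℝ, 1 < |x| → ρ x = 0
  χ_smooth : ContDiff ℝ (⊤ : ℕ∞) χ
  χ_nonneg : ∀ x, 0 ≤ χ x
  χ_supp : ∀ x : ℝ, 1 < |x| → χ x = 0
  χ_int : (∫ x in (-1 : ℝ)..1, χ x) = 1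

namespace PAWSetting

variable (S : PAWSetting)

/-- Position of a site: `false ↦ 0`, `true ↦ a`. -/
def pos (b : Bool) : ℝ := if b then S.a else 0

/-- Charge of a site: `false ↦ Z₀`, `true ↦ Z_a`. -/
def charge (b : Bool) : ℝ := if b then S.Za else S.Z0

/-- The periodized cut-off `ρ_η`. -/
def ρper (η t : ℝ) : ℝ := ρperGen S.ρ η t

/-- The periodized pseudopotential `χ_ε(x) = Σ_k (1/ε) χ((x-k)/ε)`. -/
def χper (ε x : ℝ) : ℝ := ∑' k : ℤ, (1 / ε) * S.χ ((x - (k : ℝ)) / ε)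

/-- Quadratic form of `H_ps = -d²/dx² - Z₀ χ_ε - Z_a χ_ε(·-a)` on raw pairs. -/
def aHpsRaw (ε : ℝ) (u u' v v' : ℝ → ℝ) : ℝ :=
  (∫ x in (0:ℝ)..1, u' x * v' x)
    - S.Z0 * ∫ x in (0:ℝ)..1, S.χper ε x * (u x * v x)
    - S.Za * ∫ x in (0:ℝ)..1, S.χper ε (x - S.a) * (u x * v x)

/-- Quadratic form of `H_ps` on `H¹_per`. -/
def aHps (ε : ℝ) (u v : H1per) : ℝ := S.aHpsRaw ε u.f u.f' v.f v.f'

/-- Quadratic form (over one period) of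
`δV = -Z₀χ_ε - Z_aχ_ε(·-a) + Z₀Σ_kδ_k + Z_aΣ_kδ_{k+a}`. -/
def dVraw (ε : ℝ) (u v : ℝ → ℝ) : ℝ :=
  S.Z0 * (u 0 * v 0) + S.Za * (u S.a * v S.a)
    - S.Z0 * ∫ x in (0:ℝ)..1, S.χper ε x * (u x * v x)
    - S.Za * ∫ x in (0:ℝ)..1, S.χper ε (x - S.a) * (u x * v x)

/-- The pairing `⟨u, δV v⟩_{I,η}` truncated to the interval `(I-η, I+η)`
around the site `I` (which contains exactly the Dirac mass at `I`). -/
def dVtrunc (ε η : ℝ) (b : Bool) (u v : ℝ → ℝ) : ℝ :=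
  S.charge b * (u (S.pos b) * v (S.pos b))
    - ∫ x in (S.pos b - η)..(S.pos b + η),
        (S.Z0 * S.χper ε x + S.Za * S.χper ε (x - S.a)) * (u x * v x)

/-- Gram matrix `G(P)` of the polynomials `P_k` for the weight `ρ`. -/
def GP : Matrix (Fin S.d) (Fin S.d) ℝ :=
  Matrix.of fun j k => ∫ t in (-1:ℝ)..1, S.ρ t * (Ppoly j t * Ppoly k t)

end PAWSetting

/-- The PAW atomic and pseudo wave functions at cut-off radius `η`:
`φ b i` are the (even about the site) eigenfunctions of the atomic
Hamiltonian at site `b` with eigenvalues `eps b i`, and `φt b i` the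
corresponding pseudo wave functions. -/
structure PAWFunctions (S : PAWSetting) (η : ℝ) where
  φ : Bool → Fin S.N → H1per
  φt : Bool → Fin S.N → H1per
  eps : Bool → Fin S.N → ℝ
  eps_mono : ∀ b, StrictMono (eps b)
  φ_nonzero : ∀ b i, ∃ x, (φ b i).f x ≠ 0
  φ_eigen : ∀ b i (v : H1per),
    aAtom (S.charge b) (S.pos b) (φ b i) v = eps b i * L2inner (φ b i).f v.f
  φ_even : ∀ b i (x : ℝ), (φ b i).f (S.pos b + x) = (φ b i).f (S.pos b - x)
  φt_eq : ∀ b i (x : ℝ), (∀ k : ℤ, η < |x - (S.pos b + (k : ℝ))|) →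
    (φt b i).f x = (φ b i).f x
  φt_poly : ∀ b i, ∃ q : Polynomial ℝ,
    q.natDegree ≤ 2 * S.d - 2 ∧ (∀ t : ℝ, q.eval (-t) = q.eval t) ∧
    (∀ x : ℝ, |x| ≤ η → (φt b i).f (S.pos b + x) = q.eval x) ∧
    (∀ k : ℕ, k ≤ S.d - 1 →
      ((fun p : Polynomial ℝ => p.derivative)^[k] q).eval η
        = iteratedDeriv k (φ b i).f (S.pos b + η))

namespace PAWFunctions

variable {S : PAWSetting} {η : ℝ} (D : PAWFunctions S η)

/-- `p_i^I = ρ_η(·-I) φ̃_i^I`. -/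
def p (b : Bool) (i : Fin S.N) : ℝ → ℝ :=
  fun x => S.ρper η (x - S.pos b) * (D.φt b i).f x

/-- The Gram matrix `B_I = (⟨p_i^I, φ̃_j^I⟩)`. -/
def B (b : Bool) : Matrix (Fin S.N) (Fin S.N) ℝ :=
  Matrix.of fun i j => L2inner (D.p b i) (D.φt b j).f

/-- The projector functions `p̃_k^I = Σ_j (B_I⁻¹)_{kj} p_j^I`. -/
def pt (b : Bool) (k : Fin S.N) : ℝ → ℝ :=
  fun x => ∑ j : Fin S.N, (D.B b)⁻¹ k j * D.p b j x

/-- The coefficients `⟨p̃_i^I, u⟩`. -/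
def c (b : Bool) (u : ℝ → ℝ) (i : Fin S.N) : ℝ := L2inner (D.pt b i) u

/-- The function `⟨p̃^I,u⟩ᵀ Φ_I`. -/
def projΦ (b : Bool) (u : ℝ → ℝ) : ℝ → ℝ :=
  fun x => ∑ i : Fin S.N, D.c b u i * (D.φ b i).f x

/-- The function `⟨p̃^I,u⟩ᵀ Φ_I'`. -/
def projΦ' (b : Bool) (u : ℝ → ℝ) : ℝ → ℝ :=
  fun x => ∑ i : Fin S.N, D.c b u i * (D.φ b i).f' x

/-- The function `⟨p̃^I,u⟩ᵀ Φ̃_I`. -/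
def projΦt (b : Bool) (u : ℝ → ℝ) : ℝ → ℝ :=
  fun x => ∑ i : Fin S.N, D.c b u i * (D.φt b i).f x

/-- The function `⟨p̃^I,u⟩ᵀ Φ̃_I'`. -/
def projΦt' (b : Bool) (u : ℝ → ℝ) : ℝ → ℝ :=
  fun x => ∑ i : Fin S.N, D.c b u i * (D.φt b i).f' x

/-- The matrix `A_I = (⟨p_i^I, φ_j^I⟩)`. -/
def A (b : Bool) : Matrix (Fin S.N) (Fin S.N) ℝ :=
  Matrix.of fun i j => L2inner (D.p b i) (D.φ b j).f

/-- The matrix `(⟨p̃_j^I, φ_k^I⟩)` of Assumption 2. -/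
def A2 (b : Bool) : Matrix (Fin S.N) (Fin S.N) ℝ :=
  Matrix.of fun j k => L2inner (D.pt b j) (D.φ b k).f

/-- The truncated PAW Hamiltonian form `⟨u, H^N v⟩`. -/
def hN (u v : H1per) : ℝ :=
  aH S.Z0 S.Za S.a u v + ∑ b : Bool, ∑ i : Fin S.N, ∑ j : Fin S.N,
    D.c b u.f i *
      (aH S.Z0 S.Za S.a (D.φ b i) (D.φ b j) - aH S.Z0 S.Za S.a (D.φt b i) (D.φt b j)) *
    D.c b v.f j

/-- The truncated PAW overlap form `⟨u, S^N v⟩`. -/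
def sN (u v : H1per) : ℝ :=
  L2inner u.f v.f + ∑ b : Bool, ∑ i : Fin S.N, ∑ j : Fin S.N,
    D.c b u.f i *
      (L2inner (D.φ b i).f (D.φ b j).f - L2inner (D.φt b i).f (D.φt b j).f) *
    D.c b v.f j

/-- The PAW Hamiltonian form with pseudopotential `⟨u, H^PAW v⟩`. -/
def hPAW (ε : ℝ) (u v : H1per) : ℝ :=
  S.aHps ε u v + ∑ b : Bool, ∑ i : Fin S.N, ∑ j : Fin S.N,
    D.c b u.f i *
      (aH S.Z0 S.Za S.a (D.φ b i) (D.φ b j) - S.aHps ε (D.φt b i) (D.φt b j)) *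
    D.c b v.f j

/-- `(Id + T_N)u` as a raw function. -/
def idT (u : H1per) : ℝ → ℝ :=
  fun x => u.f x + ∑ b : Bool, ∑ i : Fin S.N,
    D.c b u.f i * ((D.φ b i).f x - (D.φt b i).f x)

/-- Weak derivative of `(Id + T_N)u`. -/
def idT' (u : H1per) : ℝ → ℝ :=
  fun x => u.f' x + ∑ b : Bool, ∑ i : Fin S.N,
    D.c b u.f i * ((D.φ b i).f' x - (D.φt b i).f' x)

/-- The VPAW Hamiltonian form `⟨u, H̃ v⟩ = ⟨(Id+T_N)u, H (Id+T_N)v⟩`. -/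
def hV (u v : H1per) : ℝ :=
  aHraw S.Z0 S.Za S.a (D.idT u) (D.idT' u) (D.idT v) (D.idT' v)

/-- The VPAW overlap form `⟨u, S̃ v⟩ = ⟨(Id+T_N)u, (Id+T_N)v⟩`. -/
def sV (u v : H1per) : ℝ := L2inner (D.idT u) (D.idT v)

end PAWFunctions

/-- A family of PAW functions, one for each cut-off radius `0 < η ≤ η₀`. -/
structure PAWFamily (S : PAWSetting) (η₀ : ℝ) where
  hη₀ : 0 < η₀
  hη₀' : η₀ < min (S.a / 2) ((1 - S.a) / 2)
  data : ∀ η : ℝ, 0 < η → η ≤ η₀ → PAWFunctions S η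

/-- Assumption 1: the projector functions are well-defined, i.e. the Gram
matrices `B_I` are invertible, for all `0 < η ≤ η₀`. -/
def PAWFamily.Assumption1 {S : PAWSetting} {η₀ : ℝ} (F : PAWFamily S η₀) : Prop :=
  ∀ (η : ℝ) (h1 : 0 < η) (h2 : η ≤ η₀) (b : Bool), IsUnit ((F.data η h1 h2).B b)

/-- Assumption 2: the matrices `(⟨p̃_j^I, φ_k^I⟩)` are invertible, for all
`0 < η ≤ η₀`. -/
def PAWFamily.Assumption2 {S : PAWSetting} {η₀ : ℝ} (F : PAWFamily S η₀) : Prop :=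
  ∀ (η : ℝ) (h1 : 0 < η) (h2 : η ≤ η₀) (b : Bool), IsUnit ((F.data η h1 h2).A2 b)

/-!
Write `F_I = ⟨p̃^I,f⟩ᵀ Φ_I`, `F̃_I = ⟨p̃^I,f⟩ᵀ Φ̃_I` and `g_I = F_I - F̃_I`, so that
`(Id + T_N) f = f + g_0 + g_a`. When a symmetric bilinear form `B` is expanded at this vector, the
identity `B(g_I,g_I) + 2 B(g_I,f) = B(F_I,F_I) - B(F̃_I,F̃_I) + 2 B(g_I,f-F̃_I)` turns the terms of
the site `I` into its PAW correction and its remainder. What is left is the cross term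
`2 B(g_0,g_a)`. It vanishes because `g_0` and `g_a` are supported in the closed `η`-neighbourhoods
of `ℤ` and `a + ℤ`, which are disjoint as `2η < min(a, 1-a)`, and because the overlap form and the
form of `H` are both local.
-/

section BilinearAlgebra

variable {R W ι κ : Type*} [CommRing R] [AddCommGroup W] [Module R W] [Fintype ι] [Fintype κ]

theorem bilin_add_sum_sub_add_sum_sub (B : LinearMap.BilinForm R W) (u v : W) (p q p' q' : ι → W)
    (orthogonal : Pairwise fun b b' => B (p b - q b) (p' b' - q' b') = 0) :
    B (u + ∑ b, (p b - q b)) (v + ∑ b, (p' b - q' b)) =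
      B u v + ∑ b, (B (p b) (p' b) - B (q b) (q' b)) +
        ∑ b, (B (p b - q b) (v - q' b) + B (u - q b) (p' b - q' b)) := by
  have diagonal (b : ι) : ∑ b', B (p b - q b) (p' b' - q' b') = B (p b - q b) (p' b - q' b) :=
    Fintype.sum_eq_single b fun b' hb' => orthogonal hb'.symm
  have expansion : B (u + ∑ b, (p b - q b)) (v + ∑ b, (p' b - q' b)) =
      B u v + ∑ b, (B u (p' b - q' b) + B (p b - q b) v + B (p b - q b) (p' b - q' b)) := by
    rw [LinearMap.BilinForm.add_left, LinearMap.BilinForm.sum_left]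
    simp only [LinearMap.BilinForm.add_right, LinearMap.BilinForm.sum_right, diagonal,
      Finset.sum_add_distrib]
    ring
  rw [expansion, add_assoc, ← Finset.sum_add_distrib]
  congr 1
  refine Finset.sum_congr rfl fun b _ => ?_
  simp only [LinearMap.BilinForm.sub_left, LinearMap.BilinForm.sub_right]
  ring

theorem bilin_sum_smul_sum_smul (B : LinearMap.BilinForm R W) (c d : κ → R) (x y : κ → W) :
    B (∑ i, c i • x i) (∑ j, d j • y j) = ∑ i, ∑ j, c i * B (x i) (y j) * d j := by
  rw [LinearMap.BilinForm.sum_left]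
  simp only [LinearMap.BilinForm.sum_right, LinearMap.BilinForm.smul_left,
    LinearMap.BilinForm.smul_right, mul_assoc, mul_comm (d _)]

theorem bilin_self_add_sum_smul_sub {B : LinearMap.BilinForm R W} (hB : B.IsSymm) (u : W)
    (c : ι → κ → R) (x y : ι → κ → W)
    (orthogonal : Pairwise fun b b' => ∀ i j, B (x b i - y b i) (x b' j - y b' j) = 0) :
    B (u + ∑ b, ∑ i, c b i • (x b i - y b i)) (u + ∑ b, ∑ i, c b i • (x b i - y b i)) =
      B u u + ∑ b, ∑ i, ∑ j, c b i * (B (x b i) (x b j) - B (y b i) (y b j)) * c b j +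
        2 * ∑ b, B (∑ i, c b i • x b i - ∑ i, c b i • y b i) (u - ∑ i, c b i • y b i) := by
  have sum_smul_sub (b : ι) :
      ∑ i, c b i • (x b i - y b i) = ∑ i, c b i • x b i - ∑ i, c b i • y b i := by
    simp only [smul_sub, Finset.sum_sub_distrib]
  have sums_orthogonal : Pairwise fun b b' =>
      B (∑ i, c b i • x b i - ∑ i, c b i • y b i) (∑ i, c b' i • x b' i - ∑ i, c b' i • y b' i)
        = 0 := by
    intro b b' hb
    simp only [← sum_smul_sub, bilin_sum_smul_sum_smul, orthogonal hb, mul_zero, zero_mul,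
      Finset.sum_const_zero]
  simp only [sum_smul_sub, bilin_add_sum_sub_add_sum_sub B _ _ _ _ _ _ sums_orthogonal]
  congr 1
  · simp only [bilin_sum_smul_sum_smul, mul_sub, sub_mul, Finset.sum_sub_distrib]
  · rw [Finset.mul_sum]
    refine Finset.sum_congr rfl fun b _ => ?_
    rw [hB.eq (u - _), two_mul]

end BilinearAlgebra

/-- The functions `ℝ → ℝ` that are square integrable on the period `(0,1]`. They are not identified
up to null sets, because the Dirac masses in `H` need point values. -/
def squareIntegrable : Submodule ℝ (ℝ → ℝ) where
  carrier := {f | MemLp f 2 (volume.restrict (Set.Ioc (0 : ℝ) 1))}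
  add_mem' := MemLp.add
  zero_mem' := MemLp.zero
  smul_mem' c _ hf := hf.const_smul c

theorem squareIntegrable.intervalIntegrable_mul (u v : squareIntegrable) :
    IntervalIntegrable (fun x => u.1 x * v.1 x) volume 0 1 :=
  (intervalIntegrable_iff_integrableOn_Ioc_of_le zero_le_one).2 (u.2.integrable_mul v.2)

theorem mem_squareIntegrable_of_intervalIntegrable_sq {f : ℝ → ℝ} (hf : Measurable f)
    (hsq : IntervalIntegrable (fun x => f x ^ 2) volume 0 1) : f ∈ squareIntegrable :=
  (memLp_two_iff_integrable_sq hf.aestronglyMeasurable).2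
    ((intervalIntegrable_iff_integrableOn_Ioc_of_le zero_le_one).1 hsq)

theorem L2inner_comm (u v : ℝ → ℝ) : L2inner u v = L2inner v u := by
  simp only [L2inner, mul_comm]

theorem L2inner_add_left (u v w : squareIntegrable) :
    L2inner (u + v : squareIntegrable) w = L2inner u w + L2inner v w := by
  simp only [L2inner, Submodule.coe_add, Pi.add_apply, add_mul]
  exact intervalIntegral.integral_add (squareIntegrable.intervalIntegrable_mul u w)
    (squareIntegrable.intervalIntegrable_mul v w)

theorem L2inner_smul_left (r : ℝ) (u v : ℝ → ℝ) : L2inner (r • u) v = r * L2inner u v := by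
  simp only [L2inner, Pi.smul_apply, smul_eq_mul, mul_assoc, intervalIntegral.integral_const_mul]

/-- The inner product `L2inner` as a bilinear form. -/
def L2form : LinearMap.BilinForm ℝ squareIntegrable :=
  LinearMap.mk₂ ℝ (fun u v => L2inner u v) L2inner_add_left
    (fun r u v => L2inner_smul_left r u v)
    (fun u v w => by simp only [L2inner_comm u.1, L2inner_add_left])
    (fun r u v => by
      simp only [L2inner_comm u.1, Submodule.coe_smul, L2inner_smul_left, smul_eq_mul])

/-- Pairs `(u, u')` of square-integrable functions, `u'` playing the role of the weak derivative of
`u`: a vector space that contains `H¹_per` and on which the forms of the theorem are defined. -/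
def L2pair : Submodule ℝ ((ℝ → ℝ) × (ℝ → ℝ)) := squareIntegrable.prod squareIntegrable

namespace L2pair

/-- The projection `(u, u') ↦ u`. -/
def fnL2 : L2pair →ₗ[ℝ] squareIntegrable := (LinearMap.fst ℝ _ _).restrict fun _ h => h.1

/-- The projection `(u, u') ↦ u'`. -/
def derivL2 : L2pair →ₗ[ℝ] squareIntegrable := (LinearMap.snd ℝ _ _).restrict fun _ h => h.2

/-- The point evaluation `(u, u') ↦ u x`. -/
def eval (x : ℝ) : L2pair →ₗ[ℝ] ℝ := LinearMap.proj x ∘ₗ LinearMap.fst ℝ _ _ ∘ₗ L2pair.subtype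

/-- The form `⟨u, v⟩` of the identity operator. -/
def overlapForm : LinearMap.BilinForm ℝ L2pair := L2form.compl₁₂ fnL2 fnL2

/-- The form `aHraw` of `H` as a bilinear form. -/
def hamiltonianForm (Z0 Za A : ℝ) : LinearMap.BilinForm ℝ L2pair :=
  L2form.compl₁₂ derivL2 derivL2
    - Z0 • (LinearMap.mul ℝ ℝ).compl₁₂ (eval 0) (eval 0)
    - Za • (LinearMap.mul ℝ ℝ).compl₁₂ (eval A) (eval A)

theorem overlapForm_apply (u v : L2pair) : overlapForm u v = L2inner u.1.1 v.1.1 := rfl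

theorem hamiltonianForm_apply (Z0 Za A : ℝ) (u v : L2pair) :
    hamiltonianForm Z0 Za A u v = aHraw Z0 Za A u.1.1 u.1.2 v.1.1 v.1.2 := rfl

theorem isSymm_overlapForm : overlapForm.IsSymm :=
  ⟨fun _ _ => L2inner_comm _ _⟩

theorem isSymm_hamiltonianForm (Z0 Za A : ℝ) : (hamiltonianForm Z0 Za A).IsSymm :=
  ⟨fun u v => by simp only [hamiltonianForm_apply, aHraw, mul_comm]⟩

end L2pair

namespace H1per

/-- A function of `H¹_per` with its weak derivative, as an element of `L2pair`. -/
def toL2pair (u : H1per) : L2pair :=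
  ⟨(u.f, u.f'),
    mem_squareIntegrable_of_intervalIntegrable_sq u.cont.measurable
      ((u.cont.pow 2).intervalIntegrable 0 1),
    mem_squareIntegrable_of_intervalIntegrable_sq u.meas' u.sqInt⟩

theorem locallyIntegrable_deriv (u : H1per) : LocallyIntegrable u.f' volume := fun x =>
  ⟨Set.Icc (x - 1) (x + 1), Icc_mem_nhds (sub_one_lt x) (lt_add_one x),
    (intervalIntegrable_iff_integrableOn_Icc_of_le (by linarith)).1 (u.locInt _ _)⟩

theorem ae_hasDerivAt (u : H1per) : ∀ᵐ x, HasDerivAt u.f (u.f' x) x := by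
  filter_upwards [_root_.LocallyIntegrable.ae_hasDerivAt_integral u.locallyIntegrable_deriv]
    with x hx
  rw [funext u.ftc]
  exact (hx 0).const_add (u.f 0)

theorem ae_deriv_eq_of_eventuallyEq (u v : H1per) :
    ∀ᵐ x, u.f =ᶠ[nhds x] v.f → u.f' x = v.f' x := by
  filter_upwards [u.ae_hasDerivAt, v.ae_hasDerivAt] with x hu hv huv
  exact (hu.congr_of_eventuallyEq huv.symm).unique hv

theorem overlapForm_sub_sub_eq_zero {u v w z : H1per} (h : ∀ x, u.f x = v.f x ∨ w.f x = z.f x) :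
    L2pair.overlapForm (u.toL2pair - v.toL2pair) (w.toL2pair - z.toL2pair) = 0 := by
  have product_eq_zero (x : ℝ) : (u.f x - v.f x) * (w.f x - z.f x) = 0 := by
    simpa only [mul_eq_zero, sub_eq_zero] using h x
  rw [L2pair.overlapForm_apply]
  exact (intervalIntegral.integral_congr fun x _ => product_eq_zero x).trans
    intervalIntegral.integral_zero

theorem hamiltonianForm_sub_sub_eq_zero (Z0 Za A : ℝ) {u v w z : H1per}
    (h : ∀ x, u.f =ᶠ[nhds x] v.f ∨ w.f =ᶠ[nhds x] z.f) :
    L2pair.hamiltonianForm Z0 Za A (u.toL2pair - v.toL2pair) (w.toL2pair - z.toL2pair) = 0 := by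
  have product_eq_zero (x : ℝ) : (u.f x - v.f x) * (w.f x - z.f x) = 0 := by
    simpa only [mul_eq_zero, sub_eq_zero] using
      (h x).imp Filter.EventuallyEq.eq_of_nhds Filter.EventuallyEq.eq_of_nhds
  have deriv_product_ae_eq_zero : ∀ᵐ x, (u.f' x - v.f' x) * (w.f' x - z.f' x) = 0 := by
    filter_upwards [u.ae_deriv_eq_of_eventuallyEq v, w.ae_deriv_eq_of_eventuallyEq z] with x huv hwz
    simpa only [mul_eq_zero, sub_eq_zero] using (h x).imp huv hwz
  have integral_eq_zero : ∫ x in (0 : ℝ)..1, (u.f' x - v.f' x) * (w.f' x - z.f' x) = 0 :=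
    intervalIntegral.integral_zero_ae (deriv_product_ae_eq_zero.mono fun _ hx _ => hx)
  calc L2pair.hamiltonianForm Z0 Za A (u.toL2pair - v.toL2pair) (w.toL2pair - z.toL2pair)
    _ = (∫ x in (0 : ℝ)..1, (u.f' x - v.f' x) * (w.f' x - z.f' x))
          - Z0 * ((u.f 0 - v.f 0) * (w.f 0 - z.f 0))
          - Za * ((u.f A - v.f A) * (w.f A - z.f A)) := rfl
    _ = 0 := by rw [integral_eq_zero, product_eq_zero, product_eq_zero]; ring

end H1per

namespace PAWSetting

variable (S : PAWSetting)

theorem min_le_abs_pos_sub_pos_add_int {b b' : Bool} (hb : b ≠ b') (k : ℤ) :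
    min S.a (1 - S.a) ≤ |S.pos b - S.pos b' + k| := by
  wlog hb_true : b = true generalizing b b' k
  · rw [Bool.not_eq_true] at hb_true
    subst hb_true
    have swapped := this hb.symm (-k) (Bool.eq_true_of_not_eq_false hb.symm)
    rwa [← abs_neg, Int.cast_neg, neg_add, neg_sub, neg_neg] at swapped
  subst hb_true
  obtain rfl : b' = false := Bool.eq_false_of_not_eq_true hb.symm
  simp only [pos, if_true, Bool.false_eq_true, if_false, sub_zero]
  rcases le_or_gt 0 k with hk | hk
  · have hk : (0 : ℝ) ≤ k := by exact_mod_cast hk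
    exact (min_le_left _ _).trans (le_abs.2 (.inl (by linarith)))
  · have hk : (k : ℝ) ≤ -1 := by exact_mod_cast Int.le_sub_one_of_lt hk
    exact (min_le_right _ _).trans (le_abs.2 (.inr (by linarith)))

theorem forall_lt_abs_sub_pos_or {r : ℝ} (hr : r < min (S.a / 2) ((1 - S.a) / 2)) {b b' : Bool}
    (hb : b ≠ b') (x : ℝ) :
    (∀ k : ℤ, r < |x - (S.pos b + k)|) ∨ ∀ k : ℤ, r < |x - (S.pos b' + k)| := by
  by_contra! ⟨⟨k, hk⟩, ⟨m, hm⟩⟩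
  have two_mul_r_lt : 2 * r < min S.a (1 - S.a) := by
    rw [lt_min_iff] at hr ⊢
    constructor <;> linarith
  have separation := S.min_le_abs_pos_sub_pos_add_int hb (k - m)
  have triangle := abs_sub_le (S.pos b + k) x (S.pos b' + m)
  rw [abs_sub_comm _ x] at triangle
  rw [Int.cast_sub, show S.pos b - S.pos b' + ((k : ℝ) - m) = S.pos b + k - (S.pos b' + m) by ring]
    at separation
  linarith

end PAWSetting

namespace PAWFunctions

variable {S : PAWSetting} {η : ℝ} (D : PAWFunctions S η)

theorem φ_eventuallyEq_φt {r x : ℝ} (hr : η < r) {b : Bool}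
    (far : ∀ k : ℤ, r < |x - (S.pos b + k)|) (i : Fin S.N) :
    (D.φ b i).f =ᶠ[nhds x] (D.φt b i).f := by
  filter_upwards [Metric.ball_mem_nhds x (sub_pos.2 hr)] with y hy
  refine (D.φt_eq b i y fun k => ?_).symm
  rw [Metric.mem_ball', Real.dist_eq] at hy
  linarith [far k, abs_sub_le x y (S.pos b + k)]

theorem φ_eventuallyEq_φt_or (hη : η < min (S.a / 2) ((1 - S.a) / 2)) {b b' : Bool} (hb : b ≠ b')
    (i j : Fin S.N) (x : ℝ) :
    (D.φ b i).f =ᶠ[nhds x] (D.φt b i).f ∨ (D.φ b' j).f =ᶠ[nhds x] (D.φt b' j).f := by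
  obtain ⟨r, hηr, hr⟩ := exists_between hη
  exact (S.forall_lt_abs_sub_pos_or hr hb x).imp (fun far => D.φ_eventuallyEq_φt hηr far i)
    fun far => D.φ_eventuallyEq_φt hηr far j

theorem coe_toL2pair_add_sum_smul_sub (u : H1per) :
    ((u.toL2pair + ∑ b, ∑ i, D.c b u.f i • ((D.φ b i).toL2pair - (D.φt b i).toL2pair) : L2pair) :
      (ℝ → ℝ) × (ℝ → ℝ)) = (D.idT u, D.idT' u) := by
  ext x <;> simp [H1per.toL2pair, idT, idT', Prod.fst_sum, Prod.snd_sum]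

theorem coe_sum_smul_toL2pair_φ (b : Bool) (u : ℝ → ℝ) :
    ((∑ i, D.c b u i • (D.φ b i).toL2pair : L2pair) : (ℝ → ℝ) × (ℝ → ℝ)) =
      (D.projΦ b u, D.projΦ' b u) := by
  ext x <;> simp [H1per.toL2pair, projΦ, projΦ', Prod.fst_sum, Prod.snd_sum]

theorem coe_sum_smul_toL2pair_φt (b : Bool) (u : ℝ → ℝ) :
    ((∑ i, D.c b u i • (D.φt b i).toL2pair : L2pair) : (ℝ → ℝ) × (ℝ → ℝ)) =
      (D.projΦt b u, D.projΦt' b u) := by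
  ext x <;> simp [H1per.toL2pair, projΦt, projΦt', Prod.fst_sum, Prod.snd_sum]

end PAWFunctions

/-- **Proposition (relation between the VPAW and truncated PAW forms).** -/
theorem vpaw_paw_form_identity
    (S : PAWSetting) (η₀ : ℝ) (F : PAWFamily S η₀) (hA1 : F.Assumption1) :
    ∀ (η : ℝ) (h1 : 0 < η) (h2 : η ≤ η₀) (f : H1per),
      ((F.data η h1 h2).hV f f
        = (F.data η h1 h2).hN f f
          + 2 * ∑ b : Bool,
              aHraw S.Z0 S.Za S.a
                (fun x => (F.data η h1 h2).projΦ b f.f x - (F.data η h1 h2).projΦt b f.f x)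
                (fun x => (F.data η h1 h2).projΦ' b f.f x - (F.data η h1 h2).projΦt' b f.f x)
                (fun x => f.f x - (F.data η h1 h2).projΦt b f.f x)
                (fun x => f.f' x - (F.data η h1 h2).projΦt' b f.f x)) ∧
      ((F.data η h1 h2).sV f f
        = (F.data η h1 h2).sN f f
          + 2 * ∑ b : Bool,
              L2inner
                (fun x => (F.data η h1 h2).projΦ b f.f x - (F.data η h1 h2).projΦt b f.f x)
                (fun x => f.f x - (F.data η h1 h2).projΦt b f.f x)) := by
  intro η h1 h2 f
  have hη : η < min (S.a / 2) ((1 - S.a) / 2) := h2.trans_lt F.hη₀'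
  generalize F.data η h1 h2 = D
  have expand {B : LinearMap.BilinForm ℝ L2pair} (hB : B.IsSymm) := bilin_self_add_sum_smul_sub hB
    f.toL2pair (fun b => D.c b f.f) (fun b i => (D.φ b i).toL2pair) (fun b i => (D.φt b i).toL2pair)
  constructor
  · have h := expand (L2pair.isSymm_hamiltonianForm S.Z0 S.Za S.a) fun _ _ hb i j =>
      H1per.hamiltonianForm_sub_sub_eq_zero _ _ _ (D.φ_eventuallyEq_φt_or hη hb i j)
    simp only [L2pair.hamiltonianForm_apply, Submodule.coe_sub, D.coe_toL2pair_add_sum_smul_sub,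
      D.coe_sum_smul_toL2pair_φ, D.coe_sum_smul_toL2pair_φt] at h
    exact h
  · have h := expand L2pair.isSymm_overlapForm fun _ _ hb i j =>
      H1per.overlapForm_sub_sub_eq_zero fun x =>
        (D.φ_eventuallyEq_φt_or hη hb i j x).imp (·.eq_of_nhds) (·.eq_of_nhds)
    simp only [L2pair.overlapForm_apply, Submodule.coe_sub, D.coe_toL2pair_add_sum_smul_sub,
      D.coe_sum_smul_toL2pair_φ, D.coe_sum_smul_toL2pair_φt] at h
    exact h
end
end

section
/- Let N ≥ 1, 0 < η < 1/2, ρ a smooth positive function supported in [−1,1] and ρ_η(t) = Σ_{k∈ℤ} ρ((t−k)/η). For the sine functions θ̃_k(x) = sin(2πkx), 1 ≤ k ≤ N, let G = (∫_{−η}^{η} ρ_η(t) sin(2πjt) sin(2πkt) dt)_{1≤j,k≤N} (which is invertible) and q̃_k(x) = ρ_η(x) Σ_{j=1}^N (G^{−1})_{jk} θ̃_j(x), and set Θ̃ = (θ̃_1,…,θ̃_N)ᵀ, ⟨q̃,f⟩ = (⟨q̃_1,f⟩,…,⟨q̃_N,f⟩)ᵀ. Then there exists a constant C independent of η such that for all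 f ∈ H¹_per(0,1) and all x ∈ (−η,η): |⟨q̃,f⟩ᵀ Θ̃(x)| ≤ C ‖f‖_{L^∞(−η,η)}. -/
open MeasureTheory Real

noncomputable section

/-!
On `(-η, η)` the function `⟨q̃, f⟩ᵀ Θ̃` is the orthogonal projection of `f` onto the span of the
sines for the weight `ρ(·/η)`, so its weighted `L²` norm is at most that of `f`, which is of order
`√η ‖f‖_∞`. What remains is an inverse inequality bounding the supremum of a sine sum by `η^{-1/2}`
times its weighted `L²` norm, uniformly in `η`. The square of a sine sum is a polynomial in
`sin (πx)` whose degree does not depend on `η`; on polynomials of bounded degree all norms are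
equivalent, and rescaling gives the required power of `η`.
-/

section PolynomialInverseInequality

theorem exists_norm_map_le_mul_seminorm {E F : Type*} [AddCommGroup E] [Module ℝ E]
    [FiniteDimensional ℝ E] [SeminormedAddCommGroup F] [NormedSpace ℝ F] (p : Seminorm ℝ E)
    (hp : ∀ x, p x = 0 → x = 0) (T : E →ₗ[ℝ] F) : ∃ K, 0 < K ∧ ∀ x, ‖T x‖ ≤ K * p x := by
  let _ : NormedAddCommGroup E := AddGroupNorm.toNormedAddCommGroup
    { p.toAddGroupSeminorm with eq_zero_of_map_eq_zero' := hp }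
  let _ : NormedSpace ℝ E := ⟨fun a x => (map_smul_eq_mul p a x).le⟩
  exact T.toContinuousLinearMap.bound

open Polynomial

/-- The `L¹(0, 1)` norm of real polynomials, as a seminorm on `ℝ[X]`. -/
def polynomialL1 : Seminorm ℝ ℝ[X] :=
  Seminorm.of (fun P => ∫ s in (0 : ℝ)..1, |P.eval s|)
    (fun P Q => by
      rw [← intervalIntegral.integral_add (P.continuous.abs.intervalIntegrable _ _)
        (Q.continuous.abs.intervalIntegrable _ _)]
      refine intervalIntegral.integral_mono zero_le_one
        ((P + Q).continuous.abs.intervalIntegrable _ _)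
        ((P.continuous.abs.add Q.continuous.abs).intervalIntegrable _ _) fun s => ?_
      simpa only [eval_add] using abs_add_le (P.eval s) (Q.eval s))
    (fun a P => by
      simp only [eval_smul, smul_eq_mul, abs_mul, intervalIntegral.integral_const_mul,
        Real.norm_eq_abs])

theorem polynomialL1_apply (P : ℝ[X]) : polynomialL1 P = ∫ s in (0 : ℝ)..1, |P.eval s| := rfl

theorem eq_zero_of_polynomialL1_eq_zero {P : ℝ[X]} (hP : polynomialL1 P = 0) : P = 0 := by
  have hroot : Set.Icc (0 : ℝ) 1 ⊆ {s | P.IsRoot s} := by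
    intro s hs
    by_contra hne
    exact (intervalIntegral.integral_pos one_pos P.continuous.abs.continuousOn
      (fun _ _ => abs_nonneg _) ⟨s, hs, abs_pos.mpr hne⟩).ne' hP
  exact P.eq_zero_of_infinite_isRoot ((Set.Icc_infinite one_pos).mono hroot)

theorem exists_abs_eval_le_mul_polynomialL1 (n : ℕ) (R : ℝ) :
    ∃ K, 0 < K ∧ ∀ P : ℝ[X], P.natDegree ≤ n → ∀ s, |s| ≤ R → |P.eval s| ≤ K * polynomialL1 P := by
  let restrict := (toContinuousMapOnAlgHom (Set.Icc (-R) R)).toLinearMap ∘ₗ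
    (degreeLT ℝ (n + 1)).subtype
  obtain ⟨K, hK, hbound⟩ := exists_norm_map_le_mul_seminorm
    (polynomialL1.comp (degreeLT ℝ (n + 1)).subtype)
    (fun P hP => Subtype.ext (eq_zero_of_polynomialL1_eq_zero hP)) restrict
  refine ⟨K, hK, fun P hdeg s hs => ?_⟩
  have hmem : P ∈ degreeLT ℝ (n + 1) :=
    mem_degreeLT.mpr (degree_le_natDegree.trans_lt (by exact_mod_cast Nat.lt_succ_of_le hdeg))
  exact ((restrict ⟨P, hmem⟩).norm_coe_le_norm ⟨s, abs_le.mp hs⟩).trans (hbound ⟨P, hmem⟩)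

theorem polynomialL1_comp_affine (P : ℝ[X]) (a : ℝ) {l : ℝ} (hl : l ≠ 0) :
    polynomialL1 (P.comp (C a + C l * X)) = l⁻¹ * ∫ y in a..a + l, |P.eval y| := by
  have hscale := intervalIntegral.integral_comp_add_mul (a := 0) (b := 1)
    (fun y => |P.eval y|) hl a
  simpa only [polynomialL1_apply, eval_comp, eval_add, eval_mul, eval_C, eval_X, mul_zero,
    add_zero, mul_one, smul_eq_mul] using hscale

theorem exists_abs_eval_le_div_mul_integral (n : ℕ) (R : ℝ) :
    ∃ K, 0 < K ∧ ∀ P : ℝ[X], P.natDegree ≤ n → ∀ a b y : ℝ, a < b → |y - a| ≤ R * (b - a) →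
      |P.eval y| ≤ K / (b - a) * ∫ t in a..b, |P.eval t| := by
  obtain ⟨K, hK, hbound⟩ := exists_abs_eval_le_mul_polynomialL1 n R
  refine ⟨K, hK, fun P hdeg a b y hab hy => ?_⟩
  have hl : 0 < b - a := sub_pos.mpr hab
  have haffine : (C a + C (b - a) * X : ℝ[X]).natDegree ≤ 1 := by compute_degree
  have hcomp : (P.comp (C a + C (b - a) * X)).natDegree ≤ n :=
    natDegree_comp_le.trans ((Nat.mul_le_mul hdeg haffine).trans_eq (mul_one n))
  have hs : |(y - a) / (b - a)| ≤ R := by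
    rwa [abs_div, abs_of_pos hl, div_le_iff₀ hl]
  have hvalue := hbound _ hcomp _ hs
  simp only [eval_comp, eval_add, eval_mul, eval_C, eval_X] at hvalue
  rwa [mul_div_cancel₀ _ hl.ne', add_sub_cancel, polynomialL1_comp_affine P a hl.ne',
    add_sub_cancel, ← mul_assoc, ← div_eq_mul_inv] at hvalue

end PolynomialInverseInequality

section SineSums

/-- The sine `θ̃_{k+1}(x) = sin (2π(k+1)x)`; indices are shifted by one so that they start at `0`,
as in `GmatGen` and `qtGen`. -/
def sineMode (k : ℕ) (x : ℝ) : ℝ := Real.sin (2 * π * (k + 1) * x)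

/-- The sine sum `Σ_k c_k θ̃_{k+1}`. -/
def sineSum {N : ℕ} (c : Fin N → ℝ) (x : ℝ) : ℝ := ∑ k, c k * sineMode k x

@[fun_prop]
theorem continuous_sineMode (k : ℕ) : Continuous (sineMode k) := by
  unfold sineMode
  fun_prop

theorem periodic_sineMode (k : ℕ) : Function.Periodic (sineMode k) 1 := by
  intro x
  have harg : 2 * π * ((k : ℝ) + 1) * (x + 1)
      = 2 * π * ((k : ℝ) + 1) * x + ((k + 1 : ℕ) : ℝ) * (2 * π) := by
    push_cast
    ring
  rw [sineMode, harg, Real.sin_add_nat_mul_two_pi, sineMode]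

variable {N : ℕ}

@[fun_prop]
theorem continuous_sineSum (c : Fin N → ℝ) : Continuous (sineSum c) := by
  unfold sineSum
  fun_prop

theorem periodic_sineSum (c : Fin N → ℝ) : Function.Periodic (sineSum c) 1 := fun x => by
  simp only [sineSum, periodic_sineMode _ x]

open Polynomial in
theorem exists_sineSum_eq_sin_mul_eval_cos (c : Fin N → ℝ) :
    ∃ Q : ℝ[X], Q.natDegree ≤ N ∧
      ∀ x, sineSum c x = Real.sin (2 * π * x) * Q.eval (Real.cos (2 * π * x)) := by
  refine ⟨∑ k : Fin N, C (c k) * Chebyshev.U ℝ ((k : ℕ) : ℤ), ?_, fun x => ?_⟩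
  · refine natDegree_sum_le_of_forall_le _ _ fun k _ => (natDegree_C_mul_le _ _).trans ?_
    rw [Chebyshev.natDegree_U_natCast]
    exact k.2.le
  · simp only [sineSum, eval_finsetSum, eval_mul, eval_C, Finset.mul_sum]
    refine Finset.sum_congr rfl fun k _ => ?_
    have hU := Chebyshev.U_real_cos (2 * π * x) ((k : ℕ) : ℤ)
    have harg : 2 * π * ((k : ℕ) + 1) * x = ((((k : ℕ) : ℤ) : ℝ) + 1) * (2 * π * x) := by
      push_cast
      ring
    rw [sineMode, harg, ← hU]
    ring

open Polynomial in
theorem exists_sineSum_sq_eq_eval_sin (c : Fin N → ℝ) :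
    ∃ P : ℝ[X], P.natDegree ≤ 4 * N + 4 ∧ ∀ x, sineSum c x ^ 2 = P.eval (Real.sin (π * x)) := by
  obtain ⟨Q, hQ, hsum⟩ := exists_sineSum_eq_sin_mul_eval_cos c
  refine ⟨Q.comp (1 - C 2 * X ^ 2) ^ 2 * (C 4 * X ^ 2 * (1 - X ^ 2)), ?_, fun x => ?_⟩
  · have hcos : (1 - C 2 * X ^ 2 : ℝ[X]).natDegree ≤ 2 := by compute_degree
    have hsin_sq : (C 4 * X ^ 2 * (1 - X ^ 2) : ℝ[X]).natDegree ≤ 4 := by compute_degree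
    have hcomp : (Q.comp (1 - C 2 * X ^ 2)).natDegree ≤ N * 2 :=
      natDegree_comp_le.trans (Nat.mul_le_mul hQ hcos)
    have hprod := natDegree_mul_le_of_le (natDegree_pow_le_of_le 2 hcomp) hsin_sq
    omega
  · have hdouble : 2 * π * x = 2 * (π * x) := by ring
    have hcos : Real.cos (2 * (π * x)) = 1 - 2 * Real.sin (π * x) ^ 2 := by
      rw [Real.cos_two_mul, Real.cos_sq']
      ring
    simp only [eval_mul, eval_pow, eval_sub, eval_C, eval_X, eval_one, eval_comp]
    rw [hsum, hdouble, hcos, Real.sin_two_mul, mul_pow, mul_pow, mul_pow, Real.cos_sq']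
    ring

theorem integral_sin_pi_mul_le {g : ℝ → ℝ} (hg : Continuous g) (hg0 : ∀ y, 0 ≤ g y) {a b : ℝ}
    (hab : a ≤ b) :
    ∫ y in Real.sin (π * a)..Real.sin (π * b), g y ≤ π * ∫ t in a..b, g (Real.sin (π * t)) := by
  have hderiv : ∀ t ∈ Set.uIcc a b,
      HasDerivAt (fun t => Real.sin (π * t)) (Real.cos (π * t) * π) t := fun t _ => by
    simpa only [mul_one, id] using ((hasDerivAt_id t).const_mul π).sin
  rw [← intervalIntegral.integral_comp_mul_deriv hderiv (by fun_prop) hg,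
    ← intervalIntegral.integral_const_mul]
  refine intervalIntegral.integral_mono hab (Continuous.intervalIntegrable (by fun_prop) _ _)
    (Continuous.intervalIntegrable (by fun_prop) _ _) fun t => ?_
  calc g (Real.sin (π * t)) * (Real.cos (π * t) * π)
      ≤ g (Real.sin (π * t)) * (1 * π) := by
        gcongr
        exacts [hg0 _, Real.cos_le_one _]
    _ = π * g (Real.sin (π * t)) := by ring

theorem mul_le_sin_pi_mul_sub_sin_pi_mul {α β η : ℝ} (hα : -1 ≤ α) (hαβ : α ≤ β) (hβ : β ≤ 1)
    (hη : 0 ≤ η) (hη2 : η ≤ 1 / 2) :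
    (β - α) * (2 - |α + β|) * η ≤ Real.sin (π * (β * η)) - Real.sin (π * (α * η)) := by
  have hsum : |α + β| ≤ 2 := abs_le.mpr ⟨by linarith, by linarith⟩
  have hsin : (β - α) * η ≤ Real.sin (π * ((β - α) * η / 2)) := by
    have h := Real.mul_le_sin (x := π * ((β - α) * η / 2))
      (by have := sub_nonneg.mpr hαβ; positivity)
      (by nlinarith [Real.pi_pos, mul_le_mul (show β - α ≤ 2 by linarith) hη2 hη zero_le_two])
    rwa [show 2 / π * (π * ((β - α) * η / 2)) = (β - α) * η by field_simp] at h
  have hcos : 1 - |α + β| / 2 ≤ Real.cos (π * ((α + β) * η / 2)) := by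
    have h := Real.one_sub_mul_le_cos (x := π * (|α + β| * η / 2)) (by positivity)
      (by nlinarith [Real.pi_pos, mul_le_mul hsum hη2 hη zero_le_two])
    rw [show 2 / π * (π * (|α + β| * η / 2)) = |α + β| * η by field_simp] at h
    rw [← Real.cos_abs, abs_mul, abs_div, abs_mul, abs_of_nonneg hη, abs_of_pos Real.pi_pos,
      abs_two]
    nlinarith [abs_nonneg (α + β)]
  have hprod := mul_le_mul hsin hcos (by linarith)
    ((mul_nonneg (sub_nonneg.mpr hαβ) hη).trans hsin)
  rw [Real.sin_sub_sin, show (π * (β * η) - π * (α * η)) / 2 = π * ((β - α) * η / 2) by ring,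
    show (π * (β * η) + π * (α * η)) / 2 = π * ((α + β) * η / 2) by ring]
  linarith

theorem abs_sin_pi_mul_sub_sin_pi_mul_le {α η x : ℝ} (hα : |α| ≤ 1) (hx : |x| ≤ η) :
    |Real.sin (π * x) - Real.sin (π * (α * η))| ≤ 2 * π * η := by
  have hη : 0 ≤ η := (abs_nonneg x).trans hx
  calc |Real.sin (π * x) - Real.sin (π * (α * η))| ≤ |π * x - π * (α * η)| :=
        Real.abs_sin_sub_sin_le _ _
    _ = π * |x - α * η| := by rw [← mul_sub, abs_mul, abs_of_pos Real.pi_pos]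
    _ ≤ π * (|x| + |α| * η) := by
        gcongr
        simpa only [abs_mul, abs_of_nonneg hη] using abs_sub x (α * η)
    _ ≤ π * (η + 1 * η) := by gcongr
    _ = 2 * π * η := by ring

theorem exists_sineSum_sq_le_div_mul_integral (N : ℕ) {α β : ℝ} (hα : -1 ≤ α) (hαβ : α < β)
    (hβ : β ≤ 1) :
    ∃ K, 0 < K ∧ ∀ (c : Fin N → ℝ) (η : ℝ), 0 < η → η ≤ 1 / 2 → ∀ x, |x| ≤ η →
      sineSum c x ^ 2 ≤ K / η * ∫ t in α * η..β * η, sineSum c t ^ 2 := by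
  set δ := (β - α) * (2 - |α + β|)
  have hδ : 0 < δ := mul_pos (sub_pos.mpr hαβ)
    (sub_pos.mpr (abs_lt.mpr ⟨by linarith, by linarith⟩))
  obtain ⟨K, hK, hpoly⟩ := exists_abs_eval_le_div_mul_integral (4 * N + 4) (2 * π / δ)
  refine ⟨K / δ * π, by positivity, fun c η hη hη2 x hx => ?_⟩
  obtain ⟨P, hdeg, hP⟩ := exists_sineSum_sq_eq_eval_sin c
  have hαη : α * η ≤ β * η := by gcongr
  have hlen : δ * η ≤ Real.sin (π * (β * η)) - Real.sin (π * (α * η)) :=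
    mul_le_sin_pi_mul_sub_sin_pi_mul hα hαβ.le hβ hη.le hη2
  have hlen_pos := (mul_pos hδ hη).trans_le hlen
  have hdist : |Real.sin (π * x) - Real.sin (π * (α * η))|
      ≤ 2 * π / δ * (Real.sin (π * (β * η)) - Real.sin (π * (α * η))) := by
    calc |Real.sin (π * x) - Real.sin (π * (α * η))| ≤ 2 * π * η :=
          abs_sin_pi_mul_sub_sin_pi_mul_le (abs_le.mpr ⟨hα, by linarith⟩) hx
      _ = 2 * π / δ * (δ * η) := by field_simp
      _ ≤ _ := by gcongr
  have hchange : ∫ y in Real.sin (π * (α * η))..Real.sin (π * (β * η)), |P.eval y|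
      ≤ π * ∫ t in α * η..β * η, sineSum c t ^ 2 := by
    have h := integral_sin_pi_mul_le P.continuous.abs (fun _ => abs_nonneg _) hαη
    simpa only [← hP, abs_sq] using h
  have hint : 0 ≤ ∫ y in Real.sin (π * (α * η))..Real.sin (π * (β * η)), |P.eval y| :=
    intervalIntegral.integral_nonneg (sub_pos.mp hlen_pos).le fun _ _ => abs_nonneg _
  calc sineSum c x ^ 2 ≤ |P.eval (Real.sin (π * x))| := (hP x).trans_le (le_abs_self _)
    _ ≤ K / (Real.sin (π * (β * η)) - Real.sin (π * (α * η)))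
        * ∫ y in Real.sin (π * (α * η))..Real.sin (π * (β * η)), |P.eval y| :=
      hpoly P hdeg _ _ _ (sub_pos.mp hlen_pos) hdist
    _ ≤ K / (δ * η) * (π * ∫ t in α * η..β * η, sineSum c t ^ 2) := by gcongr
    _ = K / δ * π / η * ∫ t in α * η..β * η, sineSum c t ^ 2 := by field_simp

end SineSums

section Weight

variable {ρ : ℝ → ℝ}

theorem eq_zero_of_one_le_abs (hρc : Continuous ρ) (hρsupp : ∀ x : ℝ, 1 < |x| → ρ x = 0) {x : ℝ}
    (hx : 1 ≤ |x|) : ρ x = 0 := by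
  have hclosure : x ∈ closure (Metric.closedBall (0 : ℝ) 1)ᶜ := by
    rw [closure_compl, interior_closedBall _ one_ne_zero]
    simpa using hx
  exact Set.EqOn.closure (f := ρ) (g := 0) (fun y hy => hρsupp y (by simpa using hy)) hρc
    continuous_const hclosure

theorem exists_pos_le_on_Icc (hρc : Continuous ρ) (hρ0 : ∀ x, 0 ≤ ρ x) (hρ : ρ ≠ 0) :
    ∃ m > 0, ∃ α β, α < β ∧ ∀ x ∈ Set.Icc α β, m ≤ ρ x := by
  obtain ⟨x₀, hx₀⟩ := Function.ne_iff.mp hρ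
  have hpos : 0 < ρ x₀ := (hρ0 x₀).lt_of_ne' hx₀
  obtain ⟨r, hr, hball⟩ := Metric.nhds_basis_closedBall.eventually_iff.mp
    (hρc.continuousAt.eventually (lt_mem_nhds (half_lt_self hpos)))
  refine ⟨ρ x₀ / 2, half_pos hpos, x₀ - r, x₀ + r, by linarith, fun x hx => (hball ?_).le⟩
  rwa [Real.closedBall_eq_Icc]

theorem exists_sineSum_sq_le_div_mul_integral_weight (N : ℕ) (hρc : Continuous ρ)
    (hρ0 : ∀ x, 0 ≤ ρ x) (hρ : ρ ≠ 0) (hρsupp : ∀ x : ℝ, 1 < |x| → ρ x = 0) :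
    ∃ K, 0 < K ∧ ∀ (c : Fin N → ℝ) (η : ℝ), 0 < η → η ≤ 1 / 2 → ∀ x, |x| ≤ η →
      sineSum c x ^ 2 ≤ K / η * ∫ t in (-η)..η, ρ (t / η) * sineSum c t ^ 2 := by
  obtain ⟨m, hm, α, β, hαβ, hmρ⟩ := exists_pos_le_on_Icc hρc hρ0 hρ
  have habs : ∀ t ∈ Set.Icc α β, |t| ≤ 1 := fun t ht =>
    not_lt.mp fun h => (hm.trans_le (hmρ t ht)).ne' (hρsupp t h)
  have hα := (abs_le.mp (habs α ⟨le_rfl, hαβ.le⟩)).1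
  have hβ := (abs_le.mp (habs β ⟨hαβ.le, le_rfl⟩)).2
  obtain ⟨K, hK, hsine⟩ := exists_sineSum_sq_le_div_mul_integral N hα hαβ hβ
  refine ⟨K / m, by positivity, fun c η hη hη2 x hx => (hsine c η hη hη2 x hx).trans ?_⟩
  have hαη : α * η ≤ β * η := by gcongr
  have hlower : m * ∫ t in α * η..β * η, sineSum c t ^ 2
      ≤ ∫ t in α * η..β * η, ρ (t / η) * sineSum c t ^ 2 := by
    rw [← intervalIntegral.integral_const_mul]
    refine intervalIntegral.integral_mono_on hαη (Continuous.intervalIntegrable (by fun_prop) _ _)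
      (Continuous.intervalIntegrable (by fun_prop) _ _) fun t ht => ?_
    gcongr
    exact hmρ _ ⟨(le_div_iff₀ hη).mpr ht.1, (div_le_iff₀ hη).mpr ht.2⟩
  have hextend : ∫ t in α * η..β * η, ρ (t / η) * sineSum c t ^ 2
      ≤ ∫ t in (-η)..η, ρ (t / η) * sineSum c t ^ 2 :=
    intervalIntegral.integral_mono_interval (by nlinarith) hαη (by nlinarith)
      (.of_forall fun t => mul_nonneg (hρ0 _) (sq_nonneg _))
      (Continuous.intervalIntegrable (by fun_prop) _ _)
  calc K / η * ∫ t in α * η..β * η, sineSum c t ^ 2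
      = K / m / η * (m * ∫ t in α * η..β * η, sineSum c t ^ 2) := by field_simp
    _ ≤ K / m / η * ∫ t in (-η)..η, ρ (t / η) * sineSum c t ^ 2 := by
      gcongr
      exact hlower.trans hextend

theorem periodic_ρperGen (ρ : ℝ → ℝ) (η : ℝ) : Function.Periodic (ρperGen ρ η) 1 := by
  intro t
  rw [ρperGen, ← (Equiv.addRight (1 : ℤ)).tsum_eq, ρperGen]
  simp only [Equiv.coe_addRight, Int.cast_add, Int.cast_one, add_sub_add_right_eq_sub]

theorem ρperGen_eq_of_abs_le_half (hρc : Continuous ρ) (hρsupp : ∀ x : ℝ, 1 < |x| → ρ x = 0)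
    {η t : ℝ} (hη : 0 < η) (hη2 : η ≤ 1 / 2) (ht : |t| ≤ 1 / 2) : ρperGen ρ η t = ρ (t / η) := by
  rw [ρperGen, tsum_eq_single (0 : ℤ), Int.cast_zero, sub_zero]
  intro k hk
  refine eq_zero_of_one_le_abs hρc hρsupp ?_
  have hk1 : (1 : ℝ) ≤ |(k : ℝ)| := by exact_mod_cast Int.one_le_abs hk
  have htri := abs_sub_abs_le_abs_sub (k : ℝ) t
  rw [abs_div, abs_of_pos hη, le_div_iff₀ hη, abs_sub_comm]
  linarith

theorem integral_ρperGen_mul (hρc : Continuous ρ) (hρsupp : ∀ x : ℝ, 1 < |x| → ρ x = 0) {η : ℝ}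
    (hη : 0 < η) (hη2 : η ≤ 1 / 2) {g : ℝ → ℝ} (hg : Function.Periodic g 1) :
    ∫ t in (0 : ℝ)..1, ρperGen ρ η t * g t = ∫ t in (-η)..η, ρ (t / η) * g t := by
  have hsupport : Function.support (fun t => ρ (t / η) * g t) ⊆ Set.Ioc (-η) η := by
    intro t ht
    have habs : |t / η| < 1 :=
      not_le.mp fun h => left_ne_zero_of_mul ht (eq_zero_of_one_le_abs hρc hρsupp h)
    rw [abs_div, abs_of_pos hη, div_lt_one hη, abs_lt] at habs
    exact ⟨habs.1, habs.2.le⟩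
  calc ∫ t in (0 : ℝ)..1, ρperGen ρ η t * g t
      = ∫ t in (-(1 / 2) : ℝ)..1 / 2, ρperGen ρ η t * g t := by
        have h := ((periodic_ρperGen ρ η).mul hg).intervalIntegral_add_eq 0 (-(1 / 2))
        rwa [zero_add, show -(1 / 2) + 1 = (1 / 2 : ℝ) by norm_num] at h
    _ = ∫ t in (-(1 / 2) : ℝ)..1 / 2, ρ (t / η) * g t :=
        intervalIntegral.integral_congr fun t ht => by
          rw [Set.uIcc_of_le (by norm_num), Set.mem_Icc, ← abs_le] at ht
          simp only [ρperGen_eq_of_abs_le_half hρc hρsupp hη hη2 ht]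
    _ = ∫ t, ρ (t / η) * g t := intervalIntegral.integral_eq_integral_of_support_subset
        (hsupport.trans (Set.Ioc_subset_Ioc (by linarith) hη2))
    _ = ∫ t in (-η)..η, ρ (t / η) * g t :=
        (intervalIntegral.integral_eq_integral_of_support_subset hsupport).symm

theorem abs_le_supNormOn_Ioo {f : ℝ → ℝ} (hf : Continuous f) {a b x : ℝ} (hx : x ∈ Set.Ioo a b) :
    |f x| ≤ supNormOn f (Set.Ioo a b) :=
  le_csSup ((isCompact_Icc.bddAbove_image hf.abs.continuousOn).mono
    (Set.image_mono Set.Ioo_subset_Icc_self)) (Set.mem_image_of_mem _ hx)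

theorem integral_weight_mul_sq_le (hρc : Continuous ρ) (hρ0 : ∀ x, 0 ≤ ρ x) {η : ℝ} (hη : 0 < η)
    {f : ℝ → ℝ} (hf : Continuous f) :
    ∫ t in (-η)..η, ρ (t / η) * f t ^ 2
      ≤ η * (∫ s in (-1 : ℝ)..1, ρ s) * supNormOn f (Set.Ioo (-η) η) ^ 2 := by
  have hscale : ∫ t in (-η)..η, ρ (t / η) = η * ∫ s in (-1 : ℝ)..1, ρ s := by
    rw [intervalIntegral.integral_comp_div _ hη.ne', neg_div, div_self hη.ne', smul_eq_mul]
  rw [← hscale, ← intervalIntegral.integral_mul_const]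
  refine intervalIntegral.integral_mono_on_of_le_Ioo (by linarith)
    (Continuous.intervalIntegrable (by fun_prop) _ _)
    (Continuous.intervalIntegrable (by fun_prop) _ _) fun t ht => ?_
  rw [← sq_abs (f t)]
  gcongr
  exacts [hρ0 _, abs_le_supNormOn_Ioo hf ht]

end Weight

section Projection

theorem integral_mul_sq_le_of_integral_mul_eq {w f g : ℝ → ℝ} {a b : ℝ} {μ : Measure ℝ}
    (hab : a ≤ b) (hw : ∀ t, 0 ≤ w t) (hf : IntervalIntegrable (fun t => w t * f t ^ 2) μ a b)
    (hg : IntervalIntegrable (fun t => w t * g t ^ 2) μ a b)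
    (hgf : IntervalIntegrable (fun t => w t * (g t * f t)) μ a b)
    (horth : ∫ t in a..b, w t * (g t * f t) ∂μ = ∫ t in a..b, w t * g t ^ 2 ∂μ) :
    ∫ t in a..b, w t * g t ^ 2 ∂μ ≤ ∫ t in a..b, w t * f t ^ 2 ∂μ := by
  have hnonneg : 0 ≤ ∫ t in a..b, w t * (f t - g t) ^ 2 ∂μ :=
    intervalIntegral.integral_nonneg hab fun t _ => mul_nonneg (hw t) (sq_nonneg _)
  have hexpand : ∫ t in a..b, w t * (f t - g t) ^ 2 ∂μ
      = ∫ t in a..b, w t * f t ^ 2 - 2 * (w t * (g t * f t)) + w t * g t ^ 2 ∂μ := by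
    congr 1
    funext t
    ring
  rw [hexpand, intervalIntegral.integral_add (hf.sub (hgf.const_mul 2)) hg,
    intervalIntegral.integral_sub hf (hgf.const_mul 2), intervalIntegral.integral_const_mul,
    horth] at hnonneg
  linarith

variable {N : ℕ} {ρ : ℝ → ℝ} {η : ℝ}

/-- The coefficients `⟨q̃_{k+1}, f⟩`, so that `sineSum (projectorCoeff N ρ η f)` is the odd
projector expansion `⟨q̃, f⟩ᵀ Θ̃`. -/
def projectorCoeff (N : ℕ) (ρ : ℝ → ℝ) (η : ℝ) (f : ℝ → ℝ) (k : Fin N) : ℝ :=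
  L2inner (qtGen N ρ η k) f

/-- The moments `∫_{-η}^{η} ρ(t/η) θ̃_{j+1}(t) f(t) dt`, the right-hand side of the normal equations
of the weighted least-squares approximation of `f` by sines. -/
def sineMoment (N : ℕ) (ρ : ℝ → ℝ) (η : ℝ) (f : ℝ → ℝ) (j : Fin N) : ℝ :=
  ∫ t in (-η)..η, ρ (t / η) * (sineMode j t * f t)

theorem sum_mul_sineMoment (hρc : Continuous ρ) (c : Fin N → ℝ) {f : ℝ → ℝ} (hf : Continuous f) :
    ∑ j, c j * sineMoment N ρ η f j = ∫ t in (-η)..η, ρ (t / η) * (sineSum c t * f t) := by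
  simp only [sineMoment, ← intervalIntegral.integral_const_mul]
  rw [← intervalIntegral.integral_finsetSum fun j _ =>
    Continuous.intervalIntegrable (by fun_prop) _ _]
  congr 1
  funext t
  rw [sineSum, Finset.sum_mul, Finset.mul_sum]
  exact Finset.sum_congr rfl fun j _ => by ring

theorem projectorCoeff_eq_vecMul (hρc : Continuous ρ) (hρsupp : ∀ x : ℝ, 1 < |x| → ρ x = 0)
    (hη : 0 < η) (hη2 : η ≤ 1 / 2) {f : ℝ → ℝ} (hf : Continuous f)
    (hfper : Function.Periodic f 1) :
    projectorCoeff N ρ η f = Matrix.vecMul (sineMoment N ρ η f) (GmatGen N ρ η)⁻¹ := by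
  funext k
  set c : Fin N → ℝ := fun j => (GmatGen N ρ η)⁻¹ j k
  calc projectorCoeff N ρ η f k = ∫ t in (0 : ℝ)..1, ρperGen ρ η t * (sineSum c t * f t) :=
        intervalIntegral.integral_congr fun t _ => mul_assoc _ _ _
    _ = ∫ t in (-η)..η, ρ (t / η) * (sineSum c t * f t) :=
        integral_ρperGen_mul hρc hρsupp hη hη2 ((periodic_sineSum c).mul hfper)
    _ = ∑ j, c j * sineMoment N ρ η f j := (sum_mul_sineMoment hρc c hf).symm
    _ = Matrix.vecMul (sineMoment N ρ η f) (GmatGen N ρ η)⁻¹ k :=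
        Finset.sum_congr rfl fun j _ => mul_comm _ _

theorem GmatGen_apply (hρc : Continuous ρ) (hρsupp : ∀ x : ℝ, 1 < |x| → ρ x = 0)
    (hη : 0 < η) (hη2 : η ≤ 1 / 2) (j k : Fin N) :
    GmatGen N ρ η j k = sineMoment N ρ η (sineMode k) j := by
  refine intervalIntegral.integral_congr fun t ht => ?_
  rw [Set.uIcc_of_le (by linarith), Set.mem_Icc, ← abs_le] at ht
  simp only [ρperGen_eq_of_abs_le_half hρc hρsupp hη hη2 (ht.trans hη2), sineMode]

theorem vecMul_GmatGen (hρc : Continuous ρ) (hρsupp : ∀ x : ℝ, 1 < |x| → ρ x = 0)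
    (hη : 0 < η) (hη2 : η ≤ 1 / 2) (c : Fin N → ℝ) :
    Matrix.vecMul c (GmatGen N ρ η) = sineMoment N ρ η (sineSum c) := by
  funext k
  calc Matrix.vecMul c (GmatGen N ρ η) k = ∑ j, c j * sineMoment N ρ η (sineMode k) j := by
        simp only [Matrix.vecMul, dotProduct, GmatGen_apply hρc hρsupp hη hη2]
    _ = ∫ t in (-η)..η, ρ (t / η) * (sineSum c t * sineMode k t) :=
        sum_mul_sineMoment hρc c (continuous_sineMode k)
    _ = sineMoment N ρ η (sineSum c) k := by simp only [sineMoment, mul_comm (sineSum c _)]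

theorem sineMoment_sineSum_projectorCoeff (hρc : Continuous ρ)
    (hρsupp : ∀ x : ℝ, 1 < |x| → ρ x = 0) (hη : 0 < η) (hη2 : η ≤ 1 / 2)
    (hG : IsUnit (GmatGen N ρ η)) {f : ℝ → ℝ} (hf : Continuous f)
    (hfper : Function.Periodic f 1) :
    sineMoment N ρ η (sineSum (projectorCoeff N ρ η f)) = sineMoment N ρ η f := by
  rw [← vecMul_GmatGen hρc hρsupp hη hη2, projectorCoeff_eq_vecMul hρc hρsupp hη hη2 hf hfper,
    Matrix.vecMul_vecMul, Matrix.nonsing_inv_mul _ ((Matrix.isUnit_iff_isUnit_det _).mp hG),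
    Matrix.vecMul_one]

theorem integral_weight_mul_projector_sq_le (hρc : Continuous ρ) (hρ0 : ∀ x, 0 ≤ ρ x)
    (hρsupp : ∀ x : ℝ, 1 < |x| → ρ x = 0) (hη : 0 < η) (hη2 : η ≤ 1 / 2)
    (hG : IsUnit (GmatGen N ρ η)) {f : ℝ → ℝ} (hf : Continuous f)
    (hfper : Function.Periodic f 1) :
    ∫ t in (-η)..η, ρ (t / η) * sineSum (projectorCoeff N ρ η f) t ^ 2
      ≤ ∫ t in (-η)..η, ρ (t / η) * f t ^ 2 := by
  set c := projectorCoeff N ρ η f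
  refine integral_mul_sq_le_of_integral_mul_eq (by linarith) (fun t => hρ0 (t / η))
    (Continuous.intervalIntegrable (by fun_prop) _ _)
    (Continuous.intervalIntegrable (by fun_prop) _ _)
    (Continuous.intervalIntegrable (by fun_prop) _ _) ?_
  simp only [sq, ← sum_mul_sineMoment hρc c hf, ← sum_mul_sineMoment hρc c (continuous_sineSum c)]
  rw [sineMoment_sineSum_projectorCoeff hρc hρsupp hη hη2 hG hf hfper]

end Projection

theorem odd_projector_expansion_bound_general (N : ℕ) {ρ : ℝ → ℝ} (hρc : Continuous ρ)
    (hρ0 : ∀ x, 0 ≤ ρ x) (hρ : ρ ≠ 0) (hρsupp : ∀ x : ℝ, 1 < |x| → ρ x = 0) :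
    ∃ C : ℝ, ∀ η : ℝ, 0 < η → η ≤ 1 / 2 → IsUnit (GmatGen N ρ η) →
      ∀ f : ℝ → ℝ, Continuous f → Function.Periodic f 1 → ∀ x ∈ Set.Ioo (-η) η,
        |∑ k : Fin N, L2inner (qtGen N ρ η k) f * Real.sin (2 * Real.pi * ((k : ℕ) + 1) * x)|
          ≤ C * supNormOn f (Set.Ioo (-η) η) := by
  obtain ⟨K, hK, hsine⟩ := exists_sineSum_sq_le_div_mul_integral_weight N hρc hρ0 hρ hρsupp
  have hmass : 0 ≤ ∫ s in (-1 : ℝ)..1, ρ s :=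
    intervalIntegral.integral_nonneg (by norm_num) fun s _ => hρ0 s
  refine ⟨√(K * ∫ s in (-1 : ℝ)..1, ρ s), fun η hη hη2 hG f hf hfper x hx => ?_⟩
  have hsup := (abs_nonneg _).trans (abs_le_supNormOn_Ioo hf hx)
  refine abs_le_of_sq_le_sq ?_ (by positivity)
  rw [mul_pow, Real.sq_sqrt (by positivity)]
  calc sineSum (projectorCoeff N ρ η f) x ^ 2
      ≤ K / η * ∫ t in (-η)..η, ρ (t / η) * sineSum (projectorCoeff N ρ η f) t ^ 2 :=
        hsine _ η hη hη2 x (abs_lt.mpr hx).le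
    _ ≤ K / η * ∫ t in (-η)..η, ρ (t / η) * f t ^ 2 := by
        gcongr
        exact integral_weight_mul_projector_sq_le hρc hρ0 hρsupp hη hη2 hG hf hfper
    _ ≤ K / η * (η * (∫ s in (-1 : ℝ)..1, ρ s) * supNormOn f (Set.Ioo (-η) η) ^ 2) := by
        gcongr
        exact integral_weight_mul_sq_le hρc hρ0 hη hf
    _ = K * (∫ s in (-1 : ℝ)..1, ρ s) * supNormOn f (Set.Ioo (-η) η) ^ 2 := by field_simp

/-- **Lemma (uniform bound on the odd projector expansion).** -/
theorem odd_projector_expansion_bound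
    (N : ℕ) (hN : 1 ≤ N) (ρ : ℝ → ℝ)
    (hρs : ContDiff ℝ (⊤ : ℕ∞) ρ) (hρ0 : ∀ x, 0 ≤ ρ x)
    (hρp : ∀ x ∈ Set.Ioo (-1 : ℝ) 1, 0 < ρ x)
    (hρsupp : ∀ x : ℝ, 1 < |x| → ρ x = 0) :
    ∃ C : ℝ, ∀ (η : ℝ), 0 < η → η < 1 / 2 →
      IsUnit (GmatGen N ρ η) →
      ∀ (f : H1per) (x : ℝ), x ∈ Set.Ioo (-η) η →
        |∑ k : Fin N, L2inner (qtGen N ρ η k) f.f *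
            Real.sin (2 * Real.pi * ((k : ℕ) + 1) * x)|
          ≤ C * supNormOn f.f (Set.Ioo (-η) η) := by
  obtain ⟨C, hC⟩ := odd_projector_expansion_bound_general N hρs.continuous hρ0
    (fun h => (hρp 0 (by norm_num)).ne' (congrFun h 0)) hρsupp
  exact ⟨C, fun η hη hη2 hG f => hC η hη hη2.le hG f.f f.cont f.periodic⟩
end
end
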